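/- Feasible termination of soft processes: there is a family of polynomials {p_n}_{n∈ℕ} (one may take p_b(s) = s^(b+1)) such that for every well-formed SHOπ process P in the empty context and every m, if P reduces to Q in m steps (P →^m Q), then m ≤ p_{B(P)}(|P|) and |Q| ≤ p_{B(P)}(|P|), where |P| is the size and B(P) the box depth of P. -/

import Mathlib

/-!
The proof assigns to each process an `n`-weight, in which every constructor counts for one and the
contents of a box count `n` times, where `n` bounds the number of occurrences of each bound
variable. Reduction never takes place under a binder, so in the empty context the value substituted
by a step is closed. A linear variable uses this value once at depth 0, a !-variable uses it
once inside one box, and a §-variable uses it at most `n` times at depth 0. A contraction therefore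
adds at most the weight of the argument (`n` times the weight of the contents, for a boxed argument),
which the redex had already paid for: the weight strictly decreases (`Red.step`). Since substituted
values are closed, a step does not increase the duplicability factor, so the same `n` serves for the
whole reduction; it also preserves well-formation. Structural congruence and channel renaming
change none of these data (`SCP.same`).

The weight dominates the size, and the `n`-weight of `P` is at most `|P| * n ^ B(P)` (`cwP_le`).
Taking `n = |P|`, which bounds the duplicability factor, gives `m + |Q| ≤ |P| ^ (B(P) + 1)`.
-/


/-! Syntax of LHOπ / SHOπ processes and values (variables in de Bruijn style,
channels as names). -/

mutual
inductive Val : Type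
  | star : Val
  | var : ℕ → Val
  | lam : Proc → Val
  | blam : Proc → Val
  | bang : Val → Val
inductive Proc : Type
  | nil : Proc
  | par : Proc → Proc → Proc
  | inp : ℕ → Proc → Proc
  | binp : ℕ → Proc → Proc
  | out : ℕ → Val → Proc → Proc
  | nu : ℕ → Proc → Proc
  | app : Val → Val → Proc
end

/-! Lifting and capture-avoiding substitution. -/

mutual
def liftV (c : ℕ) : Val → Val
  | .star => .star
  | .var x => if x < c then .var x else .var (x + 1)
  | .lam P => .lam (liftP (c + 1) P)
  | .blam P => .blam (liftP (c + 1) P)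
  | .bang V => .bang (liftV c V)
def liftP (c : ℕ) : Proc → Proc
  | .nil => .nil
  | .par P Q => .par (liftP c P) (liftP c Q)
  | .inp a P => .inp a (liftP (c + 1) P)
  | .binp a P => .binp a (liftP (c + 1) P)
  | .out a V P => .out a (liftV c V) (liftP c P)
  | .nu a P => .nu a (liftP c P)
  | .app V W => .app (liftV c V) (liftV c W)
end

mutual
def substV (U : Val) (k : ℕ) : Val → Val
  | .star => .star
  | .var x => if x = k then U else if x < k then .var x else .var (x - 1)
  | .lam P => .lam (substP (liftV 0 U) (k + 1) P)
  | .blam P => .blam (substP (liftV 0 U) (k + 1) P)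
  | .bang V => .bang (substV U k V)
def substP (U : Val) (k : ℕ) : Proc → Proc
  | .nil => .nil
  | .par P Q => .par (substP U k P) (substP U k Q)
  | .inp a P => .inp a (substP (liftV 0 U) (k + 1) P)
  | .binp a P => .binp a (substP (liftV 0 U) (k + 1) P)
  | .out a V P => .out a (substV U k V) (substP U k P)
  | .nu a P => .nu a (substP U k P)
  | .app V W => .app (substV U k V) (substV U k W)
end

/-! Free channels and channel renaming (for α-conversion of restrictions). -/

mutual
def fcV : Val → Finset ℕ
  | .star => ∅
  | .var _ => ∅
  | .lam P => fcP P
  | .blam P => fcP P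
  | .bang V => fcV V
def fcP : Proc → Finset ℕ
  | .nil => ∅
  | .par P Q => fcP P ∪ fcP Q
  | .inp a P => insert a (fcP P)
  | .binp a P => insert a (fcP P)
  | .out a V P => insert a (fcV V ∪ fcP P)
  | .nu a P => fcP P \ {a}
  | .app V W => fcV V ∪ fcV W
end

mutual
def chV (a b : ℕ) : Val → Val
  | .star => .star
  | .var x => .var x
  | .lam P => .lam (chP a b P)
  | .blam P => .blam (chP a b P)
  | .bang V => .bang (chV a b V)
def chP (a b : ℕ) : Proc → Proc
  | .nil => .nil
  | .par P Q => .par (chP a b P) (chP a b Q)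
  | .inp c P => .inp (if c = a then b else c) (chP a b P)
  | .binp c P => .binp (if c = a then b else c) (chP a b P)
  | .out c V P => .out (if c = a then b else c) (chV a b V) (chP a b P)
  | .nu c P => if c = a then .nu c P else .nu c (chP a b P)
  | .app V W => .app (chV a b V) (chV a b W)
end

/-! Structural congruence: the smallest congruence containing α-equivalence
(for channel restrictions; α-equivalence of variables is syntactic identity in
de Bruijn style), associativity and commutativity of parallel composition,
exchange of restrictions, and scope extrusion.  No garbage-collection laws. -/

mutual
inductive SCV : Val → Val → Prop
  | refl (V) : SCV V V
  | symm : SCV V W → SCV W V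
  | trans : SCV U V → SCV V W → SCV U W
  | lam : SCP P Q → SCV (.lam P) (.lam Q)
  | blam : SCP P Q → SCV (.blam P) (.blam Q)
  | bang : SCV V W → SCV (.bang V) (.bang W)
inductive SCP : Proc → Proc → Prop
  | refl (P) : SCP P P
  | symm : SCP P Q → SCP Q P
  | trans : SCP P Q → SCP Q R → SCP P R
  | par : SCP P P' → SCP Q Q' → SCP (.par P Q) (.par P' Q')
  | inp : SCP P Q → SCP (.inp a P) (.inp a Q)
  | binp : SCP P Q → SCP (.binp a P) (.binp a Q)
  | out : SCV V W → SCP P Q → SCP (.out a V P) (.out a W Q)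
  | nu : SCP P Q → SCP (.nu a P) (.nu a Q)
  | app : SCV V V' → SCV W W' → SCP (.app V W) (.app V' W')
  | assoc : SCP (.par P (.par Q R)) (.par (.par P Q) R)
  | comm : SCP (.par P Q) (.par Q P)
  | nuswap : SCP (.nu a (.nu b P)) (.nu b (.nu a P))
  | extrude : a ∉ fcP Q → SCP (.nu a (.par P Q)) (.par (.nu a P) Q)
  | alpha : b ∉ fcP P → SCP (.nu a P) (.nu b (chP a b P))
end

/-! Reduction. -/

inductive Red : Proc → Proc → Prop
  | comm : Red (.par (.out a V P) (.inp a Q)) (.par P (substP V 0 Q))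
  | bcomm : Red (.par (.out a (.bang V) P) (.binp a Q)) (.par P (substP V 0 Q))
  | beta : Red (.app (.lam P) V) (substP V 0 P)
  | bbeta : Red (.app (.blam P) (.bang V)) (substP V 0 P)
  | parL : Red P Q → Red (.par P R) (.par Q R)
  | res : Red P Q → Red (.nu a P) (.nu a Q)
  | struct : SCP P P' → Red P' Q' → SCP Q' Q → Red P Q

/-- `m`-step reduction. -/
inductive RedN : ℕ → Proc → Proc → Prop
  | zero : RedN 0 P P
  | succ : Red P Q → RedN n Q R → RedN (n + 1) P R

/-! SHOπ well-formation.  A context entry is `none` (absent) or a marker: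
linear `x`, nonlinear `!x`, or nonlinear `§x`. -/

inductive SMark : Type
  | lin : SMark
  | bang : SMark
  | para : SMark
deriving DecidableEq

abbrev Ctx := List (Option SMark)

/-- Contexts made only of §-marked (or absent) variables: these admit
weakening. -/
def ParaOnly (Γ : Ctx) : Prop := ∀ e ∈ Γ, e = none ∨ e = some .para

/-- Splitting one context entry between the two premises of a binary rule:
linear and !-variables go to exactly one premise, §-variables may be shared
(implicit contraction). -/
inductive SplitE : Option SMark → Option SMark → Option SMark → Prop
  | none : SplitE none none none
  | linL : SplitE (some .lin) (some .lin) none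
  | linR : SplitE (some .lin) none (some .lin)
  | bangL : SplitE (some .bang) (some .bang) none
  | bangR : SplitE (some .bang) none (some .bang)
  | paraL : SplitE (some .para) (some .para) none
  | paraR : SplitE (some .para) none (some .para)
  | paraB : SplitE (some .para) (some .para) (some .para)

inductive Split : Ctx → Ctx → Ctx → Prop
  | nil : Split [] [] []
  | cons : SplitE e e₁ e₂ → Split Γ Γ₁ Γ₂ → Split (e :: Γ) (e₁ :: Γ₁) (e₂ :: Γ₂)

/-- Entry-wise relation between the context of `V` and the context of `!V`:
linear variables become !-marked ones, and weakening by §-variables is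
allowed.  §- and !-variables may not appear inside a !-box. -/
inductive BangE : Option SMark → Option SMark → Prop
  | lin : BangE (some .lin) (some .bang)
  | none : BangE none none
  | para : BangE none (some .para)

inductive BangCtx : Ctx → Ctx → Prop
  | nil : BangCtx [] []
  | cons : BangE e e' → BangCtx Γ Γ' → BangCtx (e :: Γ) (e' :: Γ')

mutual
inductive WfV : Ctx → Val → Prop
  | star : ParaOnly Γ → WfV Γ .star
  | varLin : ParaOnly Γ → WfV (some .lin :: Γ) (.var 0)
  | varPara : ParaOnly Γ → WfV (some .para :: Γ) (.var 0)
  | varThere : (e = none ∨ e = some SMark.para) → WfV Γ (.var x) →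
      WfV (e :: Γ) (.var (x + 1))
  | lam : WfP (some .lin :: Γ) P → WfV Γ (.lam P)
  | blamBang : WfP (some .bang :: Γ) P → WfV Γ (.blam P)
  | blamPara : WfP (some .para :: Γ) P → WfV Γ (.blam P)
  | bang : BangCtx Γ Δ → WfV Γ V → WfV Δ (.bang V)
inductive WfP : Ctx → Proc → Prop
  | nil : ParaOnly Γ → WfP Γ .nil
  | par : Split Γ Γ₁ Γ₂ → WfP Γ₁ P → WfP Γ₂ Q → WfP Γ (.par P Q)
  | inp : WfP (some .lin :: Γ) P → WfP Γ (.inp a P)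
  | binpBang : WfP (some .bang :: Γ) P → WfP Γ (.binp a P)
  | binpPara : WfP (some .para :: Γ) P → WfP Γ (.binp a P)
  | out : Split Γ Γ₁ Γ₂ → WfV Γ₁ V → WfP Γ₂ P → WfP Γ (.out a V P)
  | nu : WfP Γ P → WfP Γ (.nu a P)
  | app : Split Γ Γ₁ Γ₂ → WfV Γ₁ V → WfV Γ₂ W → WfP Γ (.app V W)
end

/-! Measures: size, box depth, free occurrences, duplicability factor,
parametrized weight, weight. -/

mutual
def sizeV : Val → ℕ
  | .star => 1
  | .var _ => 1
  | .lam P => sizeP P + 1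
  | .blam P => sizeP P + 1
  | .bang V => sizeV V + 1
def sizeP : Proc → ℕ
  | .nil => 1
  | .par P Q => sizeP P + sizeP Q + 1
  | .inp _ P => sizeP P + 1
  | .binp _ P => sizeP P + 1
  | .out _ V P => sizeV V + sizeP P + 1
  | .nu _ P => sizeP P + 1
  | .app V W => sizeV V + sizeV W + 1
end

mutual
def bdV : Val → ℕ
  | .star => 0
  | .var _ => 0
  | .lam P => bdP P
  | .blam P => bdP P
  | .bang V => bdV V + 1
def bdP : Proc → ℕ
  | .nil => 0
  | .par P Q => max (bdP P) (bdP Q)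
  | .inp _ P => bdP P
  | .binp _ P => bdP P
  | .out _ V P => max (bdV V) (bdP P)
  | .nu _ P => bdP P
  | .app V W => max (bdV V) (bdV W)
end

-- Number of free occurrences of the variable (de Bruijn index) `k`.
mutual
def foV (k : ℕ) : Val → ℕ
  | .star => 0
  | .var x => if x = k then 1 else 0
  | .lam P => foP (k + 1) P
  | .blam P => foP (k + 1) P
  | .bang V => foV k V
def foP (k : ℕ) : Proc → ℕ
  | .nil => 0
  | .par P Q => foP k P + foP k Q
  | .inp _ P => foP (k + 1) P
  | .binp _ P => foP (k + 1) P
  | .out _ V P => foV k V + foP k P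
  | .nu _ P => foP k P
  | .app V W => foV k V + foV k W
end

-- Duplicability factor.
mutual
def dV : Val → ℕ
  | .star => 1
  | .var _ => 1
  | .lam P => max (dP P) (foP 0 P)
  | .blam P => max (dP P) (foP 0 P)
  | .bang V => dV V
def dP : Proc → ℕ
  | .nil => 1
  | .par P Q => max (dP P) (dP Q)
  | .inp _ P => max (dP P) (foP 0 P)
  | .binp _ P => max (dP P) (foP 0 P)
  | .out _ V P => max (dV V) (dP P)
  | .nu _ P => dP P
  | .app V W => max (dV V) (dV W)
end

-- `n`-parametrized weight.
mutual
def wV (n : ℕ) : Val → ℕ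
  | .star => 1
  | .var _ => 1
  | .lam P => wP n P
  | .blam P => wP n P
  | .bang V => n * wV n V + 1
def wP (n : ℕ) : Proc → ℕ
  | .nil => 1
  | .par P Q => wP n P + wP n Q + 1
  | .inp _ P => wP n P + 1
  | .binp _ P => wP n P + 1
  | .out _ V P => wV n V + wP n P
  | .nu _ P => wP n P
  | .app V W => wV n V + wV n W + 1
end

/-- The weight of a process. -/
def weightP (P : Proc) : ℕ := wP (dP P) P
/-- The weight of a value. -/
def weightV (V : Val) : ℕ := wV (dV V) V

/-! ### The full weight -/

mutual
/-- The `n`-parametrized weight in which every constructor counts for one, so that it also dominates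
the size: `wV` gives abstractions and restrictions no weight of their own. -/
def cwV (n : ℕ) : Val → ℕ
  | .star => 1
  | .var _ => 1
  | .lam P => cwP n P + 1
  | .blam P => cwP n P + 1
  | .bang V => n * cwV n V + 1
/-- The process part of `cwV`. -/
def cwP (n : ℕ) : Proc → ℕ
  | .nil => 1
  | .par P Q => cwP n P + cwP n Q + 1
  | .inp _ P => cwP n P + 1
  | .binp _ P => cwP n P + 1
  | .out _ V P => cwV n V + cwP n P + 1
  | .nu _ P => cwP n P + 1
  | .app V W => cwV n V + cwV n W + 1
end

mutual
/-- Occurrences of the variable `k`, an occurrence at box depth `i` being counted `n ^ i` times. -/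
def coV (n k : ℕ) : Val → ℕ
  | .star => 0
  | .var x => if x = k then 1 else 0
  | .lam P => coP n (k + 1) P
  | .blam P => coP n (k + 1) P
  | .bang V => n * coV n k V
/-- The process part of `coV`. -/
def coP (n k : ℕ) : Proc → ℕ
  | .nil => 0
  | .par P Q => coP n k P + coP n k Q
  | .inp _ P => coP n (k + 1) P
  | .binp _ P => coP n (k + 1) P
  | .out _ V P => coV n k V + coP n k P
  | .nu _ P => coP n k P
  | .app V W => coV n k V + coV n k W
end

mutual
theorem sizeV_le_cwV (n : ℕ) (hn : 1 ≤ n) : ∀ V, sizeV V ≤ cwV n V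
  | .star => le_rfl
  | .var _ => le_rfl
  | .lam P => by have := sizeP_le_cwP n hn P; simp only [sizeV, cwV]; omega
  | .blam P => by have := sizeP_le_cwP n hn P; simp only [sizeV, cwV]; omega
  | .bang V => by have := sizeV_le_cwV n hn V; simp only [sizeV, cwV]; nlinarith
theorem sizeP_le_cwP (n : ℕ) (hn : 1 ≤ n) : ∀ P, sizeP P ≤ cwP n P
  | .nil => le_rfl
  | .par P Q => by
    have := sizeP_le_cwP n hn P; have := sizeP_le_cwP n hn Q; simp only [sizeP, cwP]; omega
  | .inp _ P => by have := sizeP_le_cwP n hn P; simp only [sizeP, cwP]; omega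
  | .binp _ P => by have := sizeP_le_cwP n hn P; simp only [sizeP, cwP]; omega
  | .out _ V P => by
    have := sizeV_le_cwV n hn V; have := sizeP_le_cwP n hn P; simp only [sizeP, cwP]; omega
  | .nu _ P => by have := sizeP_le_cwP n hn P; simp only [sizeP, cwP]; omega
  | .app V W => by
    have := sizeV_le_cwV n hn V; have := sizeV_le_cwV n hn W; simp only [sizeP, cwP]; omega
end

theorem weight_unary {n a s b : ℕ} (hn : 1 ≤ n) (h : a ≤ s * n ^ b) :
    a + 1 ≤ (s + 1) * n ^ b := by
  have := Nat.one_le_pow b n hn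
  nlinarith

theorem weight_binary {n a s b a' s' b' : ℕ} (hn : 1 ≤ n) (h : a ≤ s * n ^ b)
    (h' : a' ≤ s' * n ^ b') : a + a' + 1 ≤ (s + s' + 1) * n ^ max b b' := by
  apply weight_unary hn
  have h1 : n ^ b ≤ n ^ max b b' := Nat.pow_le_pow_right hn (le_max_left _ _)
  have h2 : n ^ b' ≤ n ^ max b b' := Nat.pow_le_pow_right hn (le_max_right _ _)
  nlinarith [Nat.mul_le_mul_left s h1, Nat.mul_le_mul_left s' h2]

mutual
theorem cwV_le (n : ℕ) (hn : 1 ≤ n) : ∀ V, cwV n V ≤ sizeV V * n ^ bdV V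
  | .star => by simp [cwV, sizeV, bdV]
  | .var _ => by simp [cwV, sizeV, bdV]
  | .lam P => weight_unary hn (cwP_le n hn P)
  | .blam P => weight_unary hn (cwP_le n hn P)
  | .bang V => by
    simp only [cwV, sizeV, bdV]
    apply weight_unary hn
    have := Nat.mul_le_mul_left n (cwV_le n hn V)
    rw [pow_succ]
    linarith
theorem cwP_le (n : ℕ) (hn : 1 ≤ n) : ∀ P, cwP n P ≤ sizeP P * n ^ bdP P
  | .nil => by simp [cwP, sizeP, bdP]
  | .par P Q => weight_binary hn (cwP_le n hn P) (cwP_le n hn Q)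
  | .inp _ P => weight_unary hn (cwP_le n hn P)
  | .binp _ P => weight_unary hn (cwP_le n hn P)
  | .out _ V P => weight_binary hn (cwV_le n hn V) (cwP_le n hn P)
  | .nu _ P => weight_unary hn (cwP_le n hn P)
  | .app V W => weight_binary hn (cwV_le n hn V) (cwV_le n hn W)
end

theorem sizeP_pos (P : Proc) : 1 ≤ sizeP P := by
  cases P <;> simp [sizeP]

mutual
theorem foV_le_sizeV : ∀ (k : ℕ) (V : Val), foV k V ≤ sizeV V
  | _, .star => Nat.zero_le _
  | k, .var x => by simp only [foV, sizeV]; split <;> omega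
  | k, .lam P => (foP_le_sizeP (k + 1) P).trans (Nat.le_succ _)
  | k, .blam P => (foP_le_sizeP (k + 1) P).trans (Nat.le_succ _)
  | k, .bang V => (foV_le_sizeV k V).trans (Nat.le_succ _)
theorem foP_le_sizeP : ∀ (k : ℕ) (P : Proc), foP k P ≤ sizeP P
  | _, .nil => Nat.zero_le _
  | k, .par P Q => by
    have := foP_le_sizeP k P; have := foP_le_sizeP k Q; simp only [foP, sizeP]; omega
  | k, .inp _ P => (foP_le_sizeP (k + 1) P).trans (Nat.le_succ _)
  | k, .binp _ P => (foP_le_sizeP (k + 1) P).trans (Nat.le_succ _)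
  | k, .out _ V P => by
    have := foV_le_sizeV k V; have := foP_le_sizeP k P; simp only [foP, sizeP]; omega
  | k, .nu _ P => (foP_le_sizeP k P).trans (Nat.le_succ _)
  | k, .app V W => by
    have := foV_le_sizeV k V; have := foV_le_sizeV k W; simp only [foP, sizeP]; omega
end

mutual
theorem dV_le_sizeV : ∀ V, dV V ≤ sizeV V
  | .star => le_rfl
  | .var _ => le_rfl
  | .lam P => by
    have := dP_le_sizeP P; have := foP_le_sizeP 0 P; simp only [dV, sizeV]; omega
  | .blam P => by
    have := dP_le_sizeP P; have := foP_le_sizeP 0 P; simp only [dV, sizeV]; omega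
  | .bang V => (dV_le_sizeV V).trans (Nat.le_succ _)
theorem dP_le_sizeP : ∀ P, dP P ≤ sizeP P
  | .nil => le_rfl
  | .par P Q => by have := dP_le_sizeP P; have := dP_le_sizeP Q; simp only [dP, sizeP]; omega
  | .inp _ P => by have := dP_le_sizeP P; have := foP_le_sizeP 0 P; simp only [dP, sizeP]; omega
  | .binp _ P => by have := dP_le_sizeP P; have := foP_le_sizeP 0 P; simp only [dP, sizeP]; omega
  | .out _ V P => by have := dV_le_sizeV V; have := dP_le_sizeP P; simp only [dP, sizeP]; omega
  | .nu _ P => (dP_le_sizeP P).trans (Nat.le_succ _)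
  | .app V W => by have := dV_le_sizeV V; have := dV_le_sizeV W; simp only [dP, sizeP]; omega
end

/-! ### Inversion of the well-formation rules -/

theorem wfV_star {Γ : Ctx} : WfV Γ .star ↔ ParaOnly Γ :=
  ⟨fun h => by cases h; assumption, .star⟩

theorem wfV_lam {Γ : Ctx} {P : Proc} : WfV Γ (.lam P) ↔ WfP (some .lin :: Γ) P :=
  ⟨fun h => by cases h; assumption, .lam⟩

theorem wfV_blam {Γ : Ctx} {P : Proc} :
    WfV Γ (.blam P) ↔ WfP (some .bang :: Γ) P ∨ WfP (some .para :: Γ) P :=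
  ⟨fun h => by cases h <;> simp [*], fun h => h.elim .blamBang .blamPara⟩

theorem wfV_bang {Δ : Ctx} {V : Val} : WfV Δ (.bang V) ↔ ∃ Γ, BangCtx Γ Δ ∧ WfV Γ V :=
  ⟨fun h => by cases h; exact ⟨_, ‹_›, ‹_›⟩, fun ⟨_, h, h'⟩ => .bang h h'⟩

theorem wfP_nil {Γ : Ctx} : WfP Γ .nil ↔ ParaOnly Γ :=
  ⟨fun h => by cases h; assumption, .nil⟩

theorem wfP_par {Γ : Ctx} {P Q : Proc} :
    WfP Γ (.par P Q) ↔ ∃ Γ₁ Γ₂, Split Γ Γ₁ Γ₂ ∧ WfP Γ₁ P ∧ WfP Γ₂ Q :=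
  ⟨fun h => by cases h; exact ⟨_, _, ‹_›, ‹_›, ‹_›⟩, fun ⟨_, _, h, h1, h2⟩ => .par h h1 h2⟩

theorem wfP_inp {Γ : Ctx} {a : ℕ} {P : Proc} : WfP Γ (.inp a P) ↔ WfP (some .lin :: Γ) P :=
  ⟨fun h => by cases h; assumption, .inp⟩

theorem wfP_binp {Γ : Ctx} {a : ℕ} {P : Proc} :
    WfP Γ (.binp a P) ↔ WfP (some .bang :: Γ) P ∨ WfP (some .para :: Γ) P :=
  ⟨fun h => by cases h <;> simp [*], fun h => h.elim .binpBang .binpPara⟩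

theorem wfP_out {Γ : Ctx} {a : ℕ} {V : Val} {P : Proc} :
    WfP Γ (.out a V P) ↔ ∃ Γ₁ Γ₂, Split Γ Γ₁ Γ₂ ∧ WfV Γ₁ V ∧ WfP Γ₂ P :=
  ⟨fun h => by cases h; exact ⟨_, _, ‹_›, ‹_›, ‹_›⟩, fun ⟨_, _, h, h1, h2⟩ => .out h h1 h2⟩

theorem wfP_nu {Γ : Ctx} {a : ℕ} {P : Proc} : WfP Γ (.nu a P) ↔ WfP Γ P :=
  ⟨fun h => by cases h; assumption, .nu⟩

theorem wfP_app {Γ : Ctx} {V W : Val} :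
    WfP Γ (.app V W) ↔ ∃ Γ₁ Γ₂, Split Γ Γ₁ Γ₂ ∧ WfV Γ₁ V ∧ WfV Γ₂ W :=
  ⟨fun h => by cases h; exact ⟨_, _, ‹_›, ‹_›, ‹_›⟩, fun ⟨_, _, h, h1, h2⟩ => .app h h1 h2⟩

/-! ### Contexts -/

theorem SplitE.swap {e e₁ e₂ : Option SMark} (h : SplitE e e₁ e₂) : SplitE e e₂ e₁ := by
  cases h <;> constructor

theorem Split.swap {Γ Γ₁ Γ₂ : Ctx} (h : Split Γ Γ₁ Γ₂) : Split Γ Γ₂ Γ₁ := by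
  induction h with
  | nil => exact .nil
  | cons h _ ih => exact .cons h.swap ih

theorem SplitE.assoc {e e₁ e₂ e₃ e₄ : Option SMark} (h : SplitE e e₁ e₂) (h' : SplitE e₂ e₃ e₄) :
    ∃ e', SplitE e e' e₄ ∧ SplitE e' e₁ e₃ := by
  cases h <;> cases h' <;>
    first
    | (refine ⟨Option.none, ?_, ?_⟩ <;> constructor)
    | (refine ⟨some .lin, ?_, ?_⟩ <;> constructor)
    | (refine ⟨some .bang, ?_, ?_⟩ <;> constructor)
    | (refine ⟨some .para, ?_, ?_⟩ <;> constructor)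

theorem Split.assoc {Γ Γ₁ Γ₂ Γ₃ Γ₄ : Ctx} (h : Split Γ Γ₁ Γ₂) (h' : Split Γ₂ Γ₃ Γ₄) :
    ∃ Γ', Split Γ Γ' Γ₄ ∧ Split Γ' Γ₁ Γ₃ := by
  induction h generalizing Γ₃ Γ₄ with
  | nil => cases h'; exact ⟨[], .nil, .nil⟩
  | cons h _ ih =>
    cases h' with
    | cons k k' =>
      obtain ⟨Δ, h1, h2⟩ := ih k'
      obtain ⟨e, h3, h4⟩ := h.assoc k
      exact ⟨e :: Δ, .cons h3 h1, .cons h4 h2⟩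

theorem Split.length {Γ Γ₁ Γ₂ : Ctx} (h : Split Γ Γ₁ Γ₂) :
    Γ₁.length = Γ.length ∧ Γ₂.length = Γ.length := by
  induction h <;> simp_all

theorem Split.append {Γ Γ₁ Γ₂ Δ Δ₁ Δ₂ : Ctx} (h : Split Γ Γ₁ Γ₂) (h' : Split Δ Δ₁ Δ₂) :
    Split (Γ ++ Δ) (Γ₁ ++ Δ₁) (Γ₂ ++ Δ₂) := by
  induction h with
  | nil => exact h'
  | cons h _ ih => exact .cons h ih

theorem Split.getD {Γ Γ₁ Γ₂ : Ctx} (h : Split Γ Γ₁ Γ₂) (k : ℕ) :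
    SplitE (Γ.getD k none) (Γ₁.getD k none) (Γ₂.getD k none) := by
  induction h generalizing k with
  | nil => simpa using SplitE.none
  | cons h _ ih =>
    cases k with
    | zero => simpa using h
    | succ k => simpa using ih k

theorem Split.unsnoc {Γ Γ₁ Γ₂ : Ctx} {e : Option SMark} (h : Split (Γ ++ [e]) Γ₁ Γ₂) :
    ∃ Δ₁ e₁ Δ₂ e₂, Γ₁ = Δ₁ ++ [e₁] ∧ Γ₂ = Δ₂ ++ [e₂] ∧ Split Γ Δ₁ Δ₂ := by
  induction Γ generalizing Γ₁ Γ₂ with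
  | nil =>
    cases h with
    | cons _ h => cases h; exact ⟨[], _, [], _, rfl, rfl, .nil⟩
  | cons x Γ ih =>
    cases h with
    | cons h h' =>
      obtain ⟨Δ₁, e₁, Δ₂, e₂, rfl, rfl, h2⟩ := ih h'
      exact ⟨_ :: Δ₁, e₁, _ :: Δ₂, e₂, rfl, rfl, .cons h h2⟩

theorem ParaOnly.split {Δ : Ctx} (h : ParaOnly Δ) : Split Δ Δ Δ := by
  induction Δ with
  | nil => exact .nil
  | cons e Δ ih =>
    refine .cons ?_ (ih fun x hx => h x (by simp [hx]))
    rcases h e (by simp) with rfl | rfl <;> constructor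

theorem ParaOnly.append {Γ Δ : Ctx} (h : ParaOnly Γ) (h' : ParaOnly Δ) : ParaOnly (Γ ++ Δ) := by
  intro e he
  rcases List.mem_append.1 he with he | he
  exacts [h e he, h' e he]

theorem ParaOnly.left {Γ Δ : Ctx} (h : ParaOnly (Γ ++ Δ)) : ParaOnly Γ :=
  fun e he => h e (by simp [he])

theorem BangCtx.length {Γ Δ : Ctx} (h : BangCtx Γ Δ) : Γ.length = Δ.length := by
  induction h <;> simp_all

theorem BangCtx.append {Γ Γ' Δ Δ' : Ctx} (h : BangCtx Γ Γ') (h' : BangCtx Δ Δ') :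
    BangCtx (Γ ++ Δ) (Γ' ++ Δ') := by
  induction h with
  | nil => exact h'
  | cons h _ ih => exact .cons h ih

theorem BangCtx.getD {Γ Δ : Ctx} (h : BangCtx Γ Δ) (k : ℕ) :
    BangE (Γ.getD k none) (Δ.getD k none) := by
  induction h generalizing k with
  | nil => simpa using BangE.none
  | cons h _ ih =>
    cases k with
    | zero => simpa using h
    | succ k => simpa using ih k

theorem BangCtx.unsnoc {Γ Δ : Ctx} {e : Option SMark} (h : BangCtx Γ (Δ ++ [e])) :
    ∃ Γ' e', Γ = Γ' ++ [e'] ∧ BangCtx Γ' Δ := by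
  induction Δ generalizing Γ with
  | nil =>
    cases h with
    | cons _ h => cases h; exact ⟨[], _, rfl, .nil⟩
  | cons x Δ ih =>
    cases h with
    | cons h h' =>
      obtain ⟨Γ', e', rfl, h2⟩ := ih h'
      exact ⟨_ :: Γ', e', rfl, .cons h h2⟩

/-- A §-only context weakens a box: it is matched by absent entries inside the box. -/
theorem ParaOnly.bangCtx {Δ : Ctx} (h : ParaOnly Δ) : ∃ Δ', BangCtx Δ' Δ ∧ ParaOnly Δ' := by
  induction Δ with
  | nil => exact ⟨[], .nil, h⟩
  | cons e Δ ih =>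
    obtain ⟨Δ', h1, h2⟩ := ih fun x hx => h x (by simp [hx])
    refine ⟨none :: Δ', .cons ?_ h1, ?_⟩
    · rcases h e (by simp) with rfl | rfl <;> constructor
    · intro x hx
      rcases List.mem_cons.1 hx with rfl | hx
      exacts [.inl rfl, h2 x hx]

/-! ### Structural congruence -/

mutual
theorem cwV_ch (a b n : ℕ) : ∀ V, cwV n (chV a b V) = cwV n V
  | .star => rfl
  | .var _ => rfl
  | .lam P => by simp only [chV, cwV, cwP_ch a b n P]
  | .blam P => by simp only [chV, cwV, cwP_ch a b n P]
  | .bang V => by simp only [chV, cwV, cwV_ch a b n V]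
theorem cwP_ch (a b n : ℕ) : ∀ P, cwP n (chP a b P) = cwP n P
  | .nil => rfl
  | .par P Q => by simp only [chP, cwP, cwP_ch a b n P, cwP_ch a b n Q]
  | .inp _ P => by simp only [chP, cwP, cwP_ch a b n P]
  | .binp _ P => by simp only [chP, cwP, cwP_ch a b n P]
  | .out _ V P => by simp only [chP, cwP, cwP_ch a b n P, cwV_ch a b n V]
  | .nu _ P => by simp only [chP]; split <;> simp only [cwP, cwP_ch a b n P]
  | .app V W => by simp only [chP, cwP, cwV_ch a b n V, cwV_ch a b n W]
end

mutual
theorem foV_ch (a b : ℕ) : ∀ k V, foV k (chV a b V) = foV k V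
  | _, .star => rfl
  | _, .var _ => rfl
  | _, .lam P => by simp only [chV, foV, foP_ch a b _ P]
  | _, .blam P => by simp only [chV, foV, foP_ch a b _ P]
  | _, .bang V => by simp only [chV, foV, foV_ch a b _ V]
theorem foP_ch (a b : ℕ) : ∀ k P, foP k (chP a b P) = foP k P
  | _, .nil => rfl
  | _, .par P Q => by simp only [chP, foP, foP_ch a b _ P, foP_ch a b _ Q]
  | _, .inp _ P => by simp only [chP, foP, foP_ch a b _ P]
  | _, .binp _ P => by simp only [chP, foP, foP_ch a b _ P]
  | _, .out _ V P => by simp only [chP, foP, foP_ch a b _ P, foV_ch a b _ V]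
  | _, .nu _ P => by simp only [chP]; split <;> simp only [foP, foP_ch a b _ P]
  | _, .app V W => by simp only [chP, foP, foV_ch a b _ V, foV_ch a b _ W]
end

mutual
theorem dV_ch (a b : ℕ) : ∀ V, dV (chV a b V) = dV V
  | .star => rfl
  | .var _ => rfl
  | .lam P => by simp only [chV, dV, dP_ch a b P, foP_ch]
  | .blam P => by simp only [chV, dV, dP_ch a b P, foP_ch]
  | .bang V => by simp only [chV, dV, dV_ch a b V]
theorem dP_ch (a b : ℕ) : ∀ P, dP (chP a b P) = dP P
  | .nil => rfl
  | .par P Q => by simp only [chP, dP, dP_ch a b P, dP_ch a b Q]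
  | .inp _ P => by simp only [chP, dP, dP_ch a b P, foP_ch]
  | .binp _ P => by simp only [chP, dP, dP_ch a b P, foP_ch]
  | .out _ V P => by simp only [chP, dP, dP_ch a b P, dV_ch a b V]
  | .nu _ P => by simp only [chP]; split <;> simp only [dP, dP_ch a b P]
  | .app V W => by simp only [chP, dP, dV_ch a b V, dV_ch a b W]
end

mutual
theorem wfV_ch (a b : ℕ) : ∀ V Γ, WfV Γ (chV a b V) ↔ WfV Γ V
  | .star, _ => Iff.rfl
  | .var _, _ => Iff.rfl
  | .lam P, _ => by simp only [chV, wfV_lam, wfP_ch a b P]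
  | .blam P, _ => by simp only [chV, wfV_blam, wfP_ch a b P]
  | .bang V, _ => by simp only [chV, wfV_bang, wfV_ch a b V]
theorem wfP_ch (a b : ℕ) : ∀ P Γ, WfP Γ (chP a b P) ↔ WfP Γ P
  | .nil, _ => Iff.rfl
  | .par P Q, _ => by simp only [chP, wfP_par, wfP_ch a b P, wfP_ch a b Q]
  | .inp _ P, _ => by simp only [chP, wfP_inp, wfP_ch a b P]
  | .binp _ P, _ => by simp only [chP, wfP_binp, wfP_ch a b P]
  | .out _ V P, _ => by simp only [chP, wfP_out, wfP_ch a b P, wfV_ch a b V]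
  | .nu _ P, _ => by simp only [chP]; split <;> simp only [wfP_nu, wfP_ch a b P]
  | .app V W, _ => by simp only [chP, wfP_app, wfV_ch a b V, wfV_ch a b W]
end

theorem wfP_par_comm {Γ : Ctx} {P Q : Proc} (h : WfP Γ (.par P Q)) : WfP Γ (.par Q P) := by
  obtain ⟨_, _, h, h1, h2⟩ := wfP_par.1 h
  exact .par h.swap h2 h1

theorem wfP_par_assoc {Γ : Ctx} {P Q R : Proc} (h : WfP Γ (.par P (.par Q R))) :
    WfP Γ (.par (.par P Q) R) := by
  obtain ⟨_, _, h, h1, h2⟩ := wfP_par.1 h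
  obtain ⟨_, _, h', h3, h4⟩ := wfP_par.1 h2
  obtain ⟨_, k1, k2⟩ := h.assoc h'
  exact .par k1 (.par k2 h1 h3) h4

theorem wfP_par_assoc' {Γ : Ctx} {P Q R : Proc} (h : WfP Γ (.par (.par P Q) R)) :
    WfP Γ (.par P (.par Q R)) := by
  -- Rotate `(P | Q) | R` to `R | (P | Q)`, then to `(R | P) | Q`, then to `(Q | R) | P`.
  exact wfP_par_comm (wfP_par_assoc (wfP_par_comm (wfP_par_assoc (wfP_par_comm h))))

/-- Agreement of two values in weights, free occurrences, duplicability and well-formation. -/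
structure SameV (V W : Val) : Prop where
  w : ∀ n, cwV n V = cwV n W
  f : ∀ k, foV k V = foV k W
  d : dV V = dV W
  wf : ∀ Γ, WfV Γ V ↔ WfV Γ W

/-- Agreement of two processes in weights, free occurrences, duplicability and well-formation. -/
structure SameP (P Q : Proc) : Prop where
  w : ∀ n, cwP n P = cwP n Q
  f : ∀ k, foP k P = foP k Q
  d : dP P = dP Q
  wf : ∀ Γ, WfP Γ P ↔ WfP Γ Q

mutual
theorem SCV.same {V W : Val} : SCV V W → SameV V W
  | .refl _ => ⟨fun _ => rfl, fun _ => rfl, rfl, fun _ => Iff.rfl⟩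
  | .symm h =>
    have i := h.same
    ⟨fun n => (i.w n).symm, fun k => (i.f k).symm, i.d.symm, fun Γ => (i.wf Γ).symm⟩
  | .trans h h' =>
    have i := h.same
    have j := h'.same
    ⟨fun n => (i.w n).trans (j.w n), fun k => (i.f k).trans (j.f k), i.d.trans j.d,
      fun Γ => (i.wf Γ).trans (j.wf Γ)⟩
  | .lam h => by
    have i := h.same
    constructor <;> intros <;> simp only [cwV, foV, dV, wfV_lam, i.w, i.f, i.d, i.wf]
  | .blam h => by
    have i := h.same
    constructor <;> intros <;> simp only [cwV, foV, dV, wfV_blam, i.w, i.f, i.d, i.wf]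
  | .bang h => by
    have i := h.same
    constructor <;> intros <;> simp only [cwV, foV, dV, wfV_bang, i.w, i.f, i.d, i.wf]
theorem SCP.same {P Q : Proc} : SCP P Q → SameP P Q
  | .refl _ => ⟨fun _ => rfl, fun _ => rfl, rfl, fun _ => Iff.rfl⟩
  | .symm h =>
    have i := h.same
    ⟨fun n => (i.w n).symm, fun k => (i.f k).symm, i.d.symm, fun Γ => (i.wf Γ).symm⟩
  | .trans h h' =>
    have i := h.same
    have j := h'.same
    ⟨fun n => (i.w n).trans (j.w n), fun k => (i.f k).trans (j.f k), i.d.trans j.d,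
      fun Γ => (i.wf Γ).trans (j.wf Γ)⟩
  | .par h h' => by
    have i := h.same
    have j := h'.same
    constructor <;> intros <;>
      simp only [cwP, foP, dP, wfP_par, i.w, i.f, i.d, i.wf, j.w, j.f, j.d, j.wf]
  | .inp h => by
    have i := h.same
    constructor <;> intros <;> simp only [cwP, foP, dP, wfP_inp, i.w, i.f, i.d, i.wf]
  | .binp h => by
    have i := h.same
    constructor <;> intros <;> simp only [cwP, foP, dP, wfP_binp, i.w, i.f, i.d, i.wf]
  | .out h h' => by
    have i := h.same
    have j := h'.same
    constructor <;> intros <;>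
      simp only [cwP, foP, dP, wfP_out, i.w, i.f, i.d, i.wf, j.w, j.f, j.d, j.wf]
  | .nu h => by
    have i := h.same
    constructor <;> intros <;> simp only [cwP, foP, dP, wfP_nu, i.w, i.f, i.d, i.wf]
  | .app h h' => by
    have i := h.same
    have j := h'.same
    constructor <;> intros <;>
      simp only [cwP, foP, dP, wfP_app, i.w, i.f, i.d, i.wf, j.w, j.f, j.d, j.wf]
  | .assoc => by
    refine ⟨fun _ => ?_, fun _ => ?_, ?_, fun _ => ⟨wfP_par_assoc, wfP_par_assoc'⟩⟩
    · simp only [cwP]; omega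
    · simp only [foP]; omega
    · simp only [dP]; omega
  | .comm => by
    refine ⟨fun _ => ?_, fun _ => ?_, ?_, fun _ => ⟨wfP_par_comm, wfP_par_comm⟩⟩
    · simp only [cwP]; omega
    · simp only [foP]; omega
    · simp only [dP]; omega
  | .nuswap => by
    constructor <;> intros <;> simp only [cwP, foP, dP, wfP_nu]
  | .extrude _ => by
    constructor <;> intros <;> simp only [cwP, foP, dP, wfP_nu, wfP_par]
    omega
  | .alpha _ => by
    constructor <;> intros <;> simp only [cwP, foP, dP, wfP_nu, cwP_ch, foP_ch, dP_ch, wfP_ch]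
end

/-! ### Occurrences of variables in well-formed terms -/

theorem wfV_var {Γ : Ctx} {x : ℕ} (h : WfV Γ (.var x)) :
    x < Γ.length ∧ (Γ.getD x none = some .lin ∨ Γ.getD x none = some .para) := by
  induction x generalizing Γ with
  | zero => cases h <;> simp
  | succ x ih =>
    cases h with
    | varThere _ h => simpa using ih h

/-- The bound imposed by a marker on the depth-weighted number of occurrences of a variable
which has `f` free occurrences. -/
def occBound (n f : ℕ) : Option SMark → ℕ
  | none => 0
  | some .lin => 1
  | some .bang => n
  | some .para => f

theorem occBound_split {n a b f g : ℕ} {e e₁ e₂ : Option SMark} (h : SplitE e e₁ e₂)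
    (ha : a ≤ occBound n f e₁) (hb : b ≤ occBound n g e₂) : a + b ≤ occBound n (f + g) e := by
  cases h <;> simp only [occBound] at * <;> omega

mutual
theorem coV_le (n : ℕ) : ∀ (V : Val) (Γ : Ctx) (k : ℕ), WfV Γ V →
    coV n k V ≤ occBound n (foV k V) (Γ.getD k none)
  | .star, _, _, _ => Nat.zero_le _
  | .var x, Γ, k, h => by
    simp only [coV, foV]
    split
    · subst x
      rcases (wfV_var h).2 with h | h <;> rw [h] <;> simp [occBound]
    · exact Nat.zero_le _
  | .lam P, Γ, k, h => by simpa [coV, foV] using coP_le n P _ (k + 1) (wfV_lam.1 h)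
  | .blam P, Γ, k, h => by
    rcases wfV_blam.1 h with h | h <;> simpa [coV, foV] using coP_le n P _ (k + 1) h
  | .bang V, Γ, k, h => by
    obtain ⟨Γ', h1, h2⟩ := wfV_bang.1 h
    have h3 := h1.getD k
    have h4 := coV_le n V _ k h2
    simp only [coV, foV]
    revert h3 h4
    generalize Γ'.getD k none = e
    generalize Γ.getD k none = e'
    rintro (_ | _ | _) h4 <;> simp only [occBound, Nat.le_zero] at h4 ⊢
    · simpa using Nat.mul_le_mul_left n h4
    · simp [h4]
    · simp [h4]
theorem coP_le (n : ℕ) : ∀ (P : Proc) (Γ : Ctx) (k : ℕ), WfP Γ P →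
    coP n k P ≤ occBound n (foP k P) (Γ.getD k none)
  | .nil, _, _, _ => Nat.zero_le _
  | .par P Q, Γ, k, h => by
    obtain ⟨_, _, h, h1, h2⟩ := wfP_par.1 h
    exact occBound_split (h.getD k) (coP_le n P _ k h1) (coP_le n Q _ k h2)
  | .inp _ P, Γ, k, h => by simpa [coP, foP] using coP_le n P _ (k + 1) (wfP_inp.1 h)
  | .binp _ P, Γ, k, h => by
    rcases wfP_binp.1 h with h | h <;> simpa [coP, foP] using coP_le n P _ (k + 1) h
  | .out _ V P, Γ, k, h => by
    obtain ⟨_, _, h, h1, h2⟩ := wfP_out.1 h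
    exact occBound_split (h.getD k) (coV_le n V _ k h1) (coP_le n P _ k h2)
  | .nu _ P, Γ, k, h => coP_le n P _ k (wfP_nu.1 h)
  | .app V W, Γ, k, h => by
    obtain ⟨_, _, h, h1, h2⟩ := wfP_app.1 h
    exact occBound_split (h.getD k) (coV_le n V _ k h1) (coV_le n W _ k h2)
end

mutual
/-- A well-formed value mentions no variable beyond its context. -/
theorem closedV : ∀ (V : Val) (Γ : Ctx) (k : ℕ), WfV Γ V → Γ.length ≤ k →
    foV k V = 0 ∧ liftV k V = V
  | .star, _, _, _, _ => ⟨rfl, rfl⟩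
  | .var x, Γ, k, h, hk => by
    have := (wfV_var h).1
    simp only [foV, liftV]
    exact ⟨if_neg (by omega), if_pos (by omega)⟩
  | .lam P, Γ, k, h, hk => by
    have := closedP P _ (k + 1) (wfV_lam.1 h) (by simpa using hk)
    simpa only [foV, liftV, Val.lam.injEq] using this
  | .blam P, Γ, k, h, hk => by
    have : foP (k + 1) P = 0 ∧ liftP (k + 1) P = P := by
      rcases wfV_blam.1 h with h | h <;> exact closedP P _ (k + 1) h (by simpa using hk)
    simpa only [foV, liftV, Val.blam.injEq] using this
  | .bang V, Γ, k, h, hk => by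
    obtain ⟨Γ', h1, h2⟩ := wfV_bang.1 h
    have := closedV V _ k h2 (h1.length ▸ hk)
    simpa only [foV, liftV, Val.bang.injEq] using this
theorem closedP : ∀ (P : Proc) (Γ : Ctx) (k : ℕ), WfP Γ P → Γ.length ≤ k →
    foP k P = 0 ∧ liftP k P = P
  | .nil, _, _, _, _ => ⟨rfl, rfl⟩
  | .par P Q, Γ, k, h, hk => by
    obtain ⟨_, _, h, h1, h2⟩ := wfP_par.1 h
    have i := closedP P _ k h1 (h.length.1 ▸ hk)
    have j := closedP Q _ k h2 (h.length.2 ▸ hk)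
    simp [foP, liftP, i, j]
  | .inp _ P, Γ, k, h, hk => by
    have := closedP P _ (k + 1) (wfP_inp.1 h) (by simpa using hk)
    simp [foP, liftP, this]
  | .binp _ P, Γ, k, h, hk => by
    have : foP (k + 1) P = 0 ∧ liftP (k + 1) P = P := by
      rcases wfP_binp.1 h with h | h <;> exact closedP P _ (k + 1) h (by simpa using hk)
    simp [foP, liftP, this]
  | .out _ V P, Γ, k, h, hk => by
    obtain ⟨_, _, h, h1, h2⟩ := wfP_out.1 h
    have i := closedV V _ k h1 (h.length.1 ▸ hk)
    have j := closedP P _ k h2 (h.length.2 ▸ hk)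
    simp [foP, liftP, i, j]
  | .nu _ P, Γ, k, h, hk => by
    have := closedP P _ k (wfP_nu.1 h) hk
    simp [foP, liftP, this]
  | .app V W, Γ, k, h, hk => by
    obtain ⟨_, _, h, h1, h2⟩ := wfP_app.1 h
    have i := closedV V _ k h1 (h.length.1 ▸ hk)
    have j := closedV W _ k h2 (h.length.2 ▸ hk)
    simp [foP, liftP, i, j]
end

/-! ### Substitution of closed values -/

mutual
theorem cwV_subst (n : ℕ) (U : Val) (hl : liftV 0 U = U) : ∀ (V : Val) (k : ℕ),
    cwV n (substV U k V) ≤ cwV n V + coV n k V * cwV n U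
  | .star, _ => by simp [substV, cwV]
  | .var x, k => by
    simp only [substV, coV]
    split
    · simp
    · split <;> simp [cwV]
  | .lam P, k => by
    have := cwP_subst n U hl P (k + 1); simp only [substV, hl, cwV, coV]; omega
  | .blam P, k => by
    have := cwP_subst n U hl P (k + 1); simp only [substV, hl, cwV, coV]; omega
  | .bang V, k => by
    have := Nat.mul_le_mul_left n (cwV_subst n U hl V k)
    simp only [substV, cwV, coV]; linarith
theorem cwP_subst (n : ℕ) (U : Val) (hl : liftV 0 U = U) : ∀ (P : Proc) (k : ℕ),
    cwP n (substP U k P) ≤ cwP n P + coP n k P * cwV n U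
  | .nil, _ => by simp [substP, cwP]
  | .par P Q, k => by
    have := cwP_subst n U hl P k; have := cwP_subst n U hl Q k
    simp only [substP, cwP, coP, add_mul]; omega
  | .inp _ P, k => by
    have := cwP_subst n U hl P (k + 1); simp only [substP, hl, cwP, coP]; omega
  | .binp _ P, k => by
    have := cwP_subst n U hl P (k + 1); simp only [substP, hl, cwP, coP]; omega
  | .out _ V P, k => by
    have := cwV_subst n U hl V k; have := cwP_subst n U hl P k
    simp only [substP, cwP, coP, add_mul]; omega
  | .nu _ P, k => by have := cwP_subst n U hl P k; simp only [substP, cwP, coP]; omega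
  | .app V W, k => by
    have := cwV_subst n U hl V k; have := cwV_subst n U hl W k
    simp only [substP, cwP, coP, add_mul]; omega
end

mutual
theorem foV_subst (U : Val) (hl : liftV 0 U = U) (hf : ∀ j, foV j U = 0) :
    ∀ (V : Val) (j k : ℕ), j < k → foV j (substV U k V) ≤ foV j V
  | .star, _, _, _ => le_rfl
  | .var x, j, k, h => by
    simp only [substV]
    split
    · simp [hf]
    · split
      · exact le_rfl
      · simp only [foV]
        rw [if_neg (by omega)]
        exact Nat.zero_le _
  | .lam P, j, k, h => by
    simpa only [substV, hl, foV] using foP_subst U hl hf P (j + 1) (k + 1) (by omega)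
  | .blam P, j, k, h => by
    simpa only [substV, hl, foV] using foP_subst U hl hf P (j + 1) (k + 1) (by omega)
  | .bang V, j, k, h => foV_subst U hl hf V j k h
theorem foP_subst (U : Val) (hl : liftV 0 U = U) (hf : ∀ j, foV j U = 0) :
    ∀ (P : Proc) (j k : ℕ), j < k → foP j (substP U k P) ≤ foP j P
  | .nil, _, _, _ => le_rfl
  | .par P Q, j, k, h => Nat.add_le_add (foP_subst U hl hf P j k h) (foP_subst U hl hf Q j k h)
  | .inp _ P, j, k, h => by
    simpa only [substP, hl, foP] using foP_subst U hl hf P (j + 1) (k + 1) (by omega)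
  | .binp _ P, j, k, h => by
    simpa only [substP, hl, foP] using foP_subst U hl hf P (j + 1) (k + 1) (by omega)
  | .out _ V P, j, k, h => Nat.add_le_add (foV_subst U hl hf V j k h) (foP_subst U hl hf P j k h)
  | .nu _ P, j, k, h => foP_subst U hl hf P j k h
  | .app V W, j, k, h => Nat.add_le_add (foV_subst U hl hf V j k h) (foV_subst U hl hf W j k h)
end

mutual
theorem dV_subst (n : ℕ) (U : Val) (hl : liftV 0 U = U) (hf : ∀ j, foV j U = 0) (hd : dV U ≤ n) :
    ∀ (V : Val) (k : ℕ), dV V ≤ n → dV (substV U k V) ≤ n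
  | .star, _, h => h
  | .var x, k, h => by
    simp only [substV]
    split
    · exact hd
    · split <;> exact h
  | .lam P, k, h => by
    simp only [substV, hl, dV, max_le_iff] at h ⊢
    exact ⟨dP_subst n U hl hf hd P _ h.1, (foP_subst U hl hf P 0 (k + 1) (by omega)).trans h.2⟩
  | .blam P, k, h => by
    simp only [substV, hl, dV, max_le_iff] at h ⊢
    exact ⟨dP_subst n U hl hf hd P _ h.1, (foP_subst U hl hf P 0 (k + 1) (by omega)).trans h.2⟩
  | .bang V, k, h => dV_subst n U hl hf hd V k h
theorem dP_subst (n : ℕ) (U : Val) (hl : liftV 0 U = U) (hf : ∀ j, foV j U = 0) (hd : dV U ≤ n) :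
    ∀ (P : Proc) (k : ℕ), dP P ≤ n → dP (substP U k P) ≤ n
  | .nil, _, h => h
  | .par P Q, k, h => by
    simp only [substP, dP, max_le_iff] at h ⊢
    exact ⟨dP_subst n U hl hf hd P _ h.1, dP_subst n U hl hf hd Q _ h.2⟩
  | .inp _ P, k, h => by
    simp only [substP, hl, dP, max_le_iff] at h ⊢
    exact ⟨dP_subst n U hl hf hd P _ h.1, (foP_subst U hl hf P 0 (k + 1) (by omega)).trans h.2⟩
  | .binp _ P, k, h => by
    simp only [substP, hl, dP, max_le_iff] at h ⊢
    exact ⟨dP_subst n U hl hf hd P _ h.1, (foP_subst U hl hf P 0 (k + 1) (by omega)).trans h.2⟩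
  | .out _ V P, k, h => by
    simp only [substP, dP, max_le_iff] at h ⊢
    exact ⟨dV_subst n U hl hf hd V _ h.1, dP_subst n U hl hf hd P _ h.2⟩
  | .nu _ P, k, h => dP_subst n U hl hf hd P k h
  | .app V W, k, h => by
    simp only [substP, dP, max_le_iff] at h ⊢
    exact ⟨dV_subst n U hl hf hd V _ h.1, dV_subst n U hl hf hd W _ h.2⟩
end

theorem weaken_var {Δ : Ctx} (hΔ : ParaOnly Δ) {x : ℕ} {Γ : Ctx} (h : WfV Γ (.var x)) :
    WfV (Γ ++ Δ) (.var x) := by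
  induction x generalizing Γ with
  | zero =>
    cases h with
    | varLin h => exact .varLin (h.append hΔ)
    | varPara h => exact .varPara (h.append hΔ)
  | succ x ih =>
    cases h with
    | varThere he h => exact .varThere he (ih h)

mutual
theorem weakenV : ∀ (V : Val) (Γ Δ : Ctx), ParaOnly Δ → WfV Γ V → WfV (Γ ++ Δ) V
  | .star, _, _, hΔ, h => .star ((wfV_star.1 h).append hΔ)
  | .var _, _, _, hΔ, h => weaken_var hΔ h
  | .lam P, _, _, hΔ, h => .lam (weakenP P _ _ hΔ (wfV_lam.1 h))
  | .blam P, _, _, hΔ, h =>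
    wfV_blam.2 ((wfV_blam.1 h).imp (weakenP P _ _ hΔ) (weakenP P _ _ hΔ))
  | .bang V, _, _, hΔ, h => by
    obtain ⟨_, h1, h2⟩ := wfV_bang.1 h
    obtain ⟨_, h3, h4⟩ := hΔ.bangCtx
    exact .bang (h1.append h3) (weakenV V _ _ h4 h2)
theorem weakenP : ∀ (P : Proc) (Γ Δ : Ctx), ParaOnly Δ → WfP Γ P → WfP (Γ ++ Δ) P
  | .nil, _, _, hΔ, h => .nil ((wfP_nil.1 h).append hΔ)
  | .par P Q, _, _, hΔ, h => by
    obtain ⟨_, _, h, h1, h2⟩ := wfP_par.1 h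
    exact .par (h.append hΔ.split) (weakenP P _ _ hΔ h1) (weakenP Q _ _ hΔ h2)
  | .inp _ P, _, _, hΔ, h => .inp (weakenP P _ _ hΔ (wfP_inp.1 h))
  | .binp _ P, _, _, hΔ, h =>
    wfP_binp.2 ((wfP_binp.1 h).imp (weakenP P _ _ hΔ) (weakenP P _ _ hΔ))
  | .out _ V P, _, _, hΔ, h => by
    obtain ⟨_, _, h, h1, h2⟩ := wfP_out.1 h
    exact .out (h.append hΔ.split) (weakenV V _ _ hΔ h1) (weakenP P _ _ hΔ h2)
  | .nu _ P, _, _, hΔ, h => .nu (weakenP P _ _ hΔ (wfP_nu.1 h))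
  | .app V W, _, _, hΔ, h => by
    obtain ⟨_, _, h, h1, h2⟩ := wfP_app.1 h
    exact .app (h.append hΔ.split) (weakenV V _ _ hΔ h1) (weakenV W _ _ hΔ h2)
end

/-- A variable term leaves only §-variables or absent entries elsewhere in its context, so either
the last entry is the variable itself, or it can be dropped. -/
theorem wfV_var_snoc {Γ : Ctx} {e : Option SMark} {x : ℕ} (h : WfV (Γ ++ [e]) (.var x)) :
    (x = Γ.length ∧ ParaOnly Γ) ∨ (x < Γ.length ∧ WfV Γ (.var x)) := by
  induction Γ generalizing x with
  | nil =>
    have := (wfV_var h).1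
    refine .inl ⟨by simpa using this, fun _ h => by simp at h⟩
  | cons y Γ ih =>
    cases h with
    | varLin h => exact .inr ⟨by simp, .varLin h.left⟩
    | varPara h => exact .inr ⟨by simp, .varPara h.left⟩
    | varThere he h =>
      rcases ih h with ⟨rfl, h'⟩ | ⟨hx, h'⟩
      · refine .inl ⟨by simp, ?_⟩
        intro z hz
        rcases List.mem_cons.1 hz with rfl | hz
        exacts [he, h' z hz]
      · exact .inr ⟨by simpa using hx, .varThere he h'⟩

mutual
/-- Substituting a closed value is well-formed whatever the marker of the variable: a value closed
in the empty context can be moved under any number of boxes. -/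
theorem wfV_subst (U : Val) (hU : WfV [] U) (hl : liftV 0 U = U) : ∀ (V : Val) (Γ : Ctx)
    (e : Option SMark), WfV (Γ ++ [e]) V → WfV Γ (substV U Γ.length V)
  | .star, _, _, h => .star (wfV_star.1 h).left
  | .var x, Γ, _, h => by
    simp only [substV]
    rcases wfV_var_snoc h with ⟨rfl, hΓ⟩ | ⟨hx, h⟩
    · simpa using weakenV U [] Γ hΓ hU
    · rw [if_neg (by omega), if_pos hx]
      exact h
  | .lam P, Γ, e, h => by
    simp only [substV, hl]
    exact .lam (wfP_subst U hU hl P (_ :: Γ) e (wfV_lam.1 h))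
  | .blam P, Γ, e, h => by
    simp only [substV, hl]
    exact wfV_blam.2 ((wfV_blam.1 h).imp (wfP_subst U hU hl P (_ :: Γ) e)
      (wfP_subst U hU hl P (_ :: Γ) e))
  | .bang V, Γ, e, h => by
    obtain ⟨_, h1, h2⟩ := wfV_bang.1 h
    obtain ⟨Γ', e', rfl, h3⟩ := h1.unsnoc
    have := wfV_subst U hU hl V Γ' e' h2
    rw [h3.length] at this
    exact .bang h3 this
theorem wfP_subst (U : Val) (hU : WfV [] U) (hl : liftV 0 U = U) : ∀ (P : Proc) (Γ : Ctx)
    (e : Option SMark), WfP (Γ ++ [e]) P → WfP Γ (substP U Γ.length P)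
  | .nil, _, _, h => .nil (wfP_nil.1 h).left
  | .par P Q, Γ, e, h => by
    obtain ⟨_, _, h, h1, h2⟩ := wfP_par.1 h
    obtain ⟨Γ₁, e₁, Γ₂, e₂, rfl, rfl, h3⟩ := h.unsnoc
    have i := wfP_subst U hU hl P Γ₁ e₁ h1
    have j := wfP_subst U hU hl Q Γ₂ e₂ h2
    rw [h3.length.1] at i
    rw [h3.length.2] at j
    exact .par h3 i j
  | .inp _ P, Γ, e, h => by
    simp only [substP, hl]
    exact .inp (wfP_subst U hU hl P (_ :: Γ) e (wfP_inp.1 h))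
  | .binp _ P, Γ, e, h => by
    simp only [substP, hl]
    exact wfP_binp.2 ((wfP_binp.1 h).imp (wfP_subst U hU hl P (_ :: Γ) e)
      (wfP_subst U hU hl P (_ :: Γ) e))
  | .out _ V P, Γ, e, h => by
    obtain ⟨_, _, h, h1, h2⟩ := wfP_out.1 h
    obtain ⟨Γ₁, e₁, Γ₂, e₂, rfl, rfl, h3⟩ := h.unsnoc
    have i := wfV_subst U hU hl V Γ₁ e₁ h1
    have j := wfP_subst U hU hl P Γ₂ e₂ h2
    rw [h3.length.1] at i
    rw [h3.length.2] at j
    exact .out h3 i j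
  | .nu _ P, Γ, e, h => .nu (wfP_subst U hU hl P Γ e (wfP_nu.1 h))
  | .app V W, Γ, e, h => by
    obtain ⟨_, _, h, h1, h2⟩ := wfP_app.1 h
    obtain ⟨Γ₁, e₁, Γ₂, e₂, rfl, rfl, h3⟩ := h.unsnoc
    have i := wfV_subst U hU hl V Γ₁ e₁ h1
    have j := wfV_subst U hU hl W Γ₂ e₂ h2
    rw [h3.length.1] at i
    rw [h3.length.2] at j
    exact .app h3 i j
end

/-- Contracting a redex with a closed argument `V`: the weight grows by at most the argument's
weight times what the marker of the bound variable allows. -/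
theorem subst_closed {n : ℕ} {V : Val} {Q : Proc} {e : Option SMark} (hV : WfV [] V)
    (hQ : WfP [e] Q) (dV' : dV V ≤ n) (dQ : dP Q ≤ n) :
    WfP [] (substP V 0 Q) ∧ dP (substP V 0 Q) ≤ n ∧
      cwP n (substP V 0 Q) ≤ cwP n Q + occBound n (foP 0 Q) e * cwV n V := by
  have hl := (closedV V [] 0 hV le_rfl).2
  have hf : ∀ j, foV j V = 0 := fun j => (closedV V [] j hV (Nat.zero_le _)).1
  refine ⟨wfP_subst V hV hl Q [] e hQ, dP_subst n V hl hf dV' Q 0 dQ, ?_⟩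
  have h1 := cwP_subst n V hl Q 0
  have h2 := coP_le n Q [e] 0 hQ
  exact h1.trans (Nat.add_le_add_left (Nat.mul_le_mul_right _ h2) _)

/-- Contracting a redex whose argument is a closed box `!V`: both a !-variable and a §-variable
use at most `n` copies of `V`. -/
theorem subst_boxed {n : ℕ} {V : Val} {Q : Proc} (hV : WfV [] (.bang V))
    (hQ : WfP [some .bang] Q ∨ WfP [some .para] Q) (dV' : dV V ≤ n) (dQ : dP Q ≤ n)
    (fQ : foP 0 Q ≤ n) :
    WfP [] (substP V 0 Q) ∧ dP (substP V 0 Q) ≤ n ∧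
      cwP n (substP V 0 Q) ≤ cwP n Q + n * cwV n V := by
  obtain ⟨_, hb, hV⟩ := wfV_bang.1 hV
  cases hb
  rcases hQ with hQ | hQ <;> obtain ⟨h1, h2, h3⟩ := subst_closed hV hQ dV' dQ
  · exact ⟨h1, h2, h3⟩
  · exact ⟨h1, h2, h3.trans (Nat.add_le_add_left (Nat.mul_le_mul_right _ fQ) _)⟩

/-! ### Reduction -/

theorem wfP_par_nil {P Q : Proc} : WfP [] (.par P Q) ↔ WfP [] P ∧ WfP [] Q :=
  ⟨fun h => by obtain ⟨_, _, h, h1, h2⟩ := wfP_par.1 h; cases h; exact ⟨h1, h2⟩,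
    fun h => .par .nil h.1 h.2⟩

theorem wfP_out_nil {a : ℕ} {V : Val} {P : Proc} (h : WfP [] (.out a V P)) :
    WfV [] V ∧ WfP [] P := by
  obtain ⟨_, _, h, h1, h2⟩ := wfP_out.1 h
  cases h
  exact ⟨h1, h2⟩

theorem wfP_app_nil {V W : Val} (h : WfP [] (.app V W)) : WfV [] V ∧ WfV [] W := by
  obtain ⟨_, _, h, h1, h2⟩ := wfP_app.1 h
  cases h
  exact ⟨h1, h2⟩

/-- Reduction preserves well-formation and the bound `n` on the duplicability factor, and
strictly decreases the `n`-weight. -/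
theorem Red.step {n : ℕ} {P Q : Proc} (h : Red P Q) (hP : WfP [] P) (hd : dP P ≤ n) :
    WfP [] Q ∧ dP Q ≤ n ∧ cwP n Q < cwP n P := by
  induction h with
  | comm =>
    obtain ⟨h1, h2⟩ := wfP_par_nil.1 hP
    obtain ⟨h3, h4⟩ := wfP_out_nil h1
    simp only [dP, max_le_iff] at hd
    obtain ⟨k1, k2, k3⟩ := subst_closed h3 (wfP_inp.1 h2) hd.1.1 hd.2.1
    refine ⟨wfP_par_nil.2 ⟨h4, k1⟩, ?_, ?_⟩
    · simp only [dP, max_le_iff]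
      exact ⟨hd.1.2, k2⟩
    · simp only [cwP, occBound] at k3 ⊢
      omega
  | bcomm =>
    obtain ⟨h1, h2⟩ := wfP_par_nil.1 hP
    obtain ⟨h3, h4⟩ := wfP_out_nil h1
    simp only [dP, dV, max_le_iff] at hd
    obtain ⟨k1, k2, k3⟩ := subst_boxed h3 (wfP_binp.1 h2) hd.1.1 hd.2.1 hd.2.2
    refine ⟨wfP_par_nil.2 ⟨h4, k1⟩, ?_, ?_⟩
    · simp only [dP, max_le_iff]
      exact ⟨hd.1.2, k2⟩
    · simp only [cwP, cwV] at k3 ⊢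
      omega
  | beta =>
    obtain ⟨h1, h2⟩ := wfP_app_nil hP
    simp only [dP, dV, max_le_iff] at hd
    obtain ⟨k1, k2, k3⟩ := subst_closed h2 (wfV_lam.1 h1) hd.2 hd.1.1
    refine ⟨k1, k2, ?_⟩
    simp only [cwP, cwV, occBound] at k3 ⊢
    omega
  | bbeta =>
    obtain ⟨h1, h2⟩ := wfP_app_nil hP
    simp only [dP, dV, max_le_iff] at hd
    obtain ⟨k1, k2, k3⟩ := subst_boxed h2 (wfV_blam.1 h1) hd.2 hd.1.1 hd.1.2
    refine ⟨k1, k2, ?_⟩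
    simp only [cwP, cwV] at k3 ⊢
    omega
  | parL _ ih =>
    obtain ⟨h1, h2⟩ := wfP_par_nil.1 hP
    simp only [dP, max_le_iff] at hd
    obtain ⟨k1, k2, k3⟩ := ih h1 hd.1
    refine ⟨wfP_par_nil.2 ⟨k1, h2⟩, ?_, ?_⟩
    · simp only [dP, max_le_iff]
      exact ⟨k2, hd.2⟩
    · simp only [cwP]
      omega
  | res _ ih =>
    obtain ⟨k1, k2, k3⟩ := ih (wfP_nu.1 hP) hd
    refine ⟨.nu k1, k2, ?_⟩
    simp only [cwP]
    omega
  | struct s _ s' ih =>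
    have i := s.same
    have j := s'.same
    obtain ⟨k1, k2, k3⟩ := ih ((i.wf _).1 hP) (i.d ▸ hd)
    exact ⟨(j.wf _).1 k1, j.d ▸ k2, by rw [i.w, ← j.w]; exact k3⟩

theorem RedN.bound {n m : ℕ} {P Q : Proc} (h : RedN m P Q) (hP : WfP [] P) (hd : dP P ≤ n) :
    m + cwP n Q ≤ cwP n P := by
  induction h with
  | zero => omega
  | succ h _ ih =>
    obtain ⟨k1, k2, k3⟩ := h.step hP hd
    have := ih k1 k2
    omega

/-- Feasible termination of soft processes: there is a family of polynomials
`{p_n}` such that whenever a well-formed (in the empty context) soft process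
`P` reduces to `Q` in `m` steps, both `m` and the size of `Q` are bounded by
`p_{B(P)}(|P|)`. -/
theorem feasible_termination :
    ∃ p : ℕ → Polynomial ℕ, ∀ (P Q : Proc) (m : ℕ),
      WfP [] P → RedN m P Q →
      m ≤ (p (bdP P)).eval (sizeP P) ∧
      sizeP Q ≤ (p (bdP P)).eval (sizeP P) := by
  refine ⟨fun b => Polynomial.X ^ (b + 1), fun P Q m hP hR => ?_⟩
  have hn := sizeP_pos P
  have h1 := hR.bound hP (dP_le_sizeP P)
  have h2 := cwP_le (sizeP P) hn P
  have h3 := sizeP_le_cwP (sizeP P) hn Q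
  simp only [Polynomial.eval_pow, Polynomial.eval_X]
  rw [pow_succ']
  omega
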